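/- The right real matrix representation Θ reverses the complex-quaternion product: for all pairs X = (x, y) and A = (a, b) of real quaternions, Θ(X·A) = Θ(A)·Θ(X), where X·A = (xa − y*b, x*b + ya). -/

import Mathlib

open Quaternion Matrix

noncomputable def rm (a : ℍ[ℝ]) : Matrix (Fin 4) (Fin 4) ℝ :=
  !![a.re, -a.imI, -a.imJ, -a.imK;
     a.imI, a.re, a.imK, -a.imJ;
     a.imJ, -a.imK, a.re, a.imI;
     a.imK, a.imJ, -a.imI, a.re]

/-- The star operation a* = a₀ + a₁e₁ − a₂e₂ − a₃e₃. -/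
noncomputable def st (a : ℍ[ℝ]) : ℍ[ℝ] := ⟨a.re, a.imI, -a.imJ, -a.imK⟩

/-- The right real matrix representation of the complex quaternion X = x + iy. -/
noncomputable def Theta (x y : ℍ[ℝ]) : Matrix (Fin 4 ⊕ Fin 4) (Fin 4 ⊕ Fin 4) ℝ :=
  Matrix.fromBlocks (rm x) (-(rm y)) (rm (st y)) (rm (st x))

/-!
The matrix `ρ(a)` is the matrix of right multiplication by `a` in the basis `1, e₁, e₂, e₃`, so `ρ`
is additive and reverses products. The operation `a*` is conjugation by `e₁`, hence a ring
automorphism, and it is an involution because `e₁² = -1` is central. Expanding the block product,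
these facts identify `Θ(A) Θ(X)` with `Θ(X A)` block by block.
-/

theorem mulRight_add (R : Type*) {A : Type*} [Semiring R] [NonUnitalNonAssocSemiring A] [Module R A]
    [IsScalarTower R A A] (a b : A) :
    LinearMap.mulRight R (a + b) = LinearMap.mulRight R a + LinearMap.mulRight R b :=
  LinearMap.ext fun x => mul_add x a b

/-- The basis `1, e₁, e₂, e₃`, with Mathlib's basis of `QuaternionAlgebra` retyped so that the
lemmas about `ℍ[ℝ]` apply. -/
noncomputable def basisOneIJK : Module.Basis (Fin 4) ℝ ℍ[ℝ] :=
  QuaternionAlgebra.basisOneIJK (-1) 0 (-1)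

theorem basisOneIJK_repr (x : ℍ[ℝ]) :
    ⇑(basisOneIJK.repr x) = ![x.re, x.imI, x.imJ, x.imK] :=
  QuaternionAlgebra.coe_basisOneIJK_repr (-1) 0 (-1) x

theorem rm_mulVec_repr (a x : ℍ[ℝ]) :
    rm a *ᵥ basisOneIJK.repr x = basisOneIJK.repr (x * a) := by
  rw [basisOneIJK_repr, basisOneIJK_repr]
  ext i
  fin_cases i <;> simp [rm, Matrix.mulVec, dotProduct, Fin.sum_univ_four] <;> ring

theorem rm_eq_toMatrix_mulRight (a : ℍ[ℝ]) :
    rm a = LinearMap.toMatrix basisOneIJK basisOneIJK (LinearMap.mulRight ℝ a) := by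
  rw [← LinearMap.toMatrix_toLin basisOneIJK basisOneIJK (rm a)]
  congr 1
  ext1 x
  refine basisOneIJK.repr.injective (DFunLike.coe_injective ?_)
  rw [Matrix.repr_toLin, rm_mulVec_repr, LinearMap.mulRight_apply]

theorem rm_mul_rev (x a : ℍ[ℝ]) : rm (x * a) = rm a * rm x := by
  simp only [rm_eq_toMatrix_mulRight, LinearMap.mulRight_mul,
    LinearMap.toMatrix_comp basisOneIJK basisOneIJK basisOneIJK]

theorem rm_add (x a : ℍ[ℝ]) : rm (x + a) = rm x + rm a := by
  simp only [rm_eq_toMatrix_mulRight, mulRight_add, map_add]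

theorem rm_sub (x a : ℍ[ℝ]) : rm (x - a) = rm x - rm a := by
  rw [eq_sub_iff_add_eq, ← rm_add, sub_add_cancel]

@[simp] theorem st_re (x : ℍ[ℝ]) : (st x).re = x.re := rfl

@[simp] theorem st_imI (x : ℍ[ℝ]) : (st x).imI = x.imI := rfl

@[simp] theorem st_imJ (x : ℍ[ℝ]) : (st x).imJ = -x.imJ := rfl

@[simp] theorem st_imK (x : ℍ[ℝ]) : (st x).imK = -x.imK := rfl

/-- The quaternion unit `e₁`, which implements `st` by conjugation. -/
noncomputable def unitI : ℍ[ℝ] := ⟨0, 1, 0, 0⟩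

@[simp] theorem unitI_re : unitI.re = 0 := rfl

@[simp] theorem unitI_imI : unitI.imI = 1 := rfl

@[simp] theorem unitI_imJ : unitI.imJ = 0 := rfl

@[simp] theorem unitI_imK : unitI.imK = 0 := rfl

theorem unitI_mul_unitI : unitI * unitI = -1 := by
  ext <;> simp

theorem unitI_ne_zero : unitI ≠ 0 := by
  intro unitI_eq_zero
  simpa [unitI_eq_zero] using unitI_mul_unitI

theorem st_eq_conj (x : ℍ[ℝ]) : st x = unitI * x * unitI⁻¹ := by
  have st_mul_unitI : st x * unitI = unitI * x := by ext <;> simp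
  rw [← st_mul_unitI, mul_inv_cancel_right₀ unitI_ne_zero]

theorem st_mul (x a : ℍ[ℝ]) : st (x * a) = st x * st a := by
  simp only [st_eq_conj, mul_assoc, inv_mul_cancel_left₀ unitI_ne_zero]

theorem st_add (x a : ℍ[ℝ]) : st (x + a) = st x + st a := by
  simp only [st_eq_conj, mul_add, add_mul]

theorem st_sub (x a : ℍ[ℝ]) : st (x - a) = st x - st a := by
  simp only [st_eq_conj, mul_sub, sub_mul]

theorem st_st (x : ℍ[ℝ]) : st (st x) = x := by
  calc st (st x) = unitI * unitI * x * (unitI * unitI)⁻¹ := by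
        simp only [st_eq_conj, _root_.mul_inv_rev, mul_assoc]
    _ = x := by simp [unitI_mul_unitI]

theorem Theta_mul (x y a b : ℍ[ℝ]) :
    Theta (x * a - st y * b) (st x * b + y * a) = Theta a b * Theta x y := by
  have upper_left : rm (x * a - st y * b) = rm a * rm x + -rm b * rm (st y) := by
    rw [rm_sub, rm_mul_rev, rm_mul_rev, sub_eq_add_neg, Matrix.neg_mul]
  have upper_right : -rm (st x * b + y * a) = rm a * -rm y + -rm b * rm (st x) := by
    rw [rm_add, rm_mul_rev, rm_mul_rev, neg_add_rev, Matrix.mul_neg, Matrix.neg_mul]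
  have lower_left : rm (st (st x * b + y * a)) = rm (st b) * rm x + rm (st a) * rm (st y) := by
    rw [st_add, st_mul, st_mul, st_st, rm_add, rm_mul_rev, rm_mul_rev]
  have lower_right :
      rm (st (x * a - st y * b)) = rm (st b) * -rm y + rm (st a) * rm (st x) := by
    rw [st_sub, st_mul, st_mul, st_st, rm_sub, rm_mul_rev, rm_mul_rev, Matrix.mul_neg,
      neg_add_eq_sub]
  rw [Theta, Theta, Theta, Matrix.fromBlocks_multiply, upper_left, upper_right, lower_left,
    lower_right]
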